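/- arXiv:0710.4324 — 2 statements merged into one kernel-verified Lean document; each statement's English description precedes it below -/
import Mathlib

section
/- Let r > 0, b ∈ ℝ, and let B_r(0) ⊂ ℝ² be the open disk of radius r centered at the origin. Let w be a C¹ function on the closed disk with w = b on the boundary circle ∂B_r(0), and suppose ∫_{B_r(0)} e^{2w(y)} dy = a with a > π r² e^{2b}. Then ∫_{B_r(0)} |∇w(y)|² dy ≥ 4π · ( ln( a e^{−2b}/(π r²) ) + (π r² e^{2b})/a − 1 ). -/
open MeasureTheory Real Set Metric

/-!
After scaling and subtracting `b`, let `u` vanish on the boundary of the unit disk `D` and have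
`∫_D e^{2u} = π (1 + t)`. The profile `G(p) = (1 + t) / (1 + t |p|²)` has `∫_D G² = π (1 + t)` too,
so the Knothe map `Φ(x, y) = (T(x), S_x(y))` transports the density `e^{2u}` to `G²`. Its Jacobian
determinant is the product of the diagonal derivatives, so the arithmetic-geometric mean inequality
gives `∫_D G = ∫_D e^{2u} / G(Φ) ≤ ½ ∫_D e^u div Φ`. Integrating by parts, the boundary term
`½ ∫_{∂D} Φ · ν` is at most `π` because `|Φ| ≤ 1`, and Young's inequality bounds `-½ ∫_D e^u ∇u · Φ`
by `∫_D |∇u|² / (4κ) + (κ / 4) ∫_D e^{2u} |Φ|²`, where the last integral equals `∫_D G² |p|²`.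
For `κ = 2t / (1 + t)` all these inequalities are equalities when `e^u = G`. The Knothe map, rather
than the optimal one, needs only one-dimensional transport, whose smoothness is elementary.
-/

section IntervalIntegral

variable {a b : ℝ} {f : ℝ → ℝ}

lemma intervalIntegral_le_add_of_ae_Ioo {B g₁ g₂ : ℝ → ℝ} {c₁ c₂ : ℝ} (hab : a ≤ b)
    (hf : IntervalIntegrable f volume a b) (hB : IntervalIntegrable B volume a b)
    (hg₁ : IntervalIntegrable g₁ volume a b) (hg₂ : IntervalIntegrable g₂ volume a b)
    (hle : ∀ᵐ x, x ∈ Ioo a b → f x ≤ B x + c₁ * g₁ x + c₂ * g₂ x) :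
    ∫ x in a..b, f x ≤
      (∫ x in a..b, B x) + c₁ * (∫ x in a..b, g₁ x) + c₂ * ∫ x in a..b, g₂ x := by
  rw [← intervalIntegral.integral_const_mul, ← intervalIntegral.integral_const_mul,
    ← intervalIntegral.integral_add hB (hg₁.const_mul c₁),
    ← intervalIntegral.integral_add (hB.add (hg₁.const_mul c₁)) (hg₂.const_mul c₂)]
  refine intervalIntegral.integral_mono_ae_restrict hab hf
    ((hB.add (hg₁.const_mul c₁)).add (hg₂.const_mul c₂)) ?_
  rw [← Measure.restrict_congr_set Ioo_ae_eq_Icc]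
  exact (ae_restrict_iff' measurableSet_Ioo).2 hle

lemma strictMonoOn_intervalIntegral (hf : Continuous f) (hpos : ∀ x ∈ Ioo a b, 0 < f x) :
    StrictMonoOn (fun x => ∫ z in a..x, f z) (Icc a b) := by
  refine strictMonoOn_of_deriv_pos (convex_Icc a b)
    (intervalIntegral.continuous_primitive (fun _ _ => hf.intervalIntegrable _ _) a).continuousOn
    fun x hx => ?_
  rw [interior_Icc] at hx
  rw [hf.deriv_integral]
  exact hpos x hx

lemma exists_continuous_inverse_of_strictMonoOn (hab : a ≤ b) (hf : ContinuousOn f (Icc a b))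
    (hmono : StrictMonoOn f (Icc a b)) :
    ∃ R : ℝ → ℝ, Continuous R ∧ (∀ y, R y ∈ Icc a b) ∧ ∀ y ∈ Icc (f a) (f b), f (R y) = y := by
  have himage : f '' Icc a b = Icc (f a) (f b) := hf.image_Icc_of_monotoneOn hab hmono.monotoneOn
  have hle : f a ≤ f b := hmono.monotoneOn (left_mem_Icc.2 hab) (right_mem_Icc.2 hab) hab
  let e : Icc a b ≃o Icc (f a) (f b) := (hmono.orderIso f _).trans (OrderIso.setCongr _ _ himage)
  have he (z : Icc a b) : (e z : ℝ) = f z := rfl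
  refine ⟨fun y => e.symm (projIcc _ _ hle y),
    continuous_subtype_val.comp (e.symm.continuous.comp continuous_projIcc),
    fun y => (e.symm _).2, fun y hy => ?_⟩
  rw [← he, OrderIso.apply_symm_apply, projIcc_of_mem hle hy]

end IntervalIntegral

/-- `T` is the increasing map from `[a, b]` onto `[c, d]` that pushes the density `p`, positive on
`(a, b)`, forward to the density `q`, positive on `(c, d)`. The relation `q (T x) * T' x = p x` is
solved for the derivative, and `T` is prescribed on all of `ℝ`, with values in `[c, d]`, so that
its continuity can be used without restricting to `[a, b]`. -/
structure IsTransportMap (p q : ℝ → ℝ) (a b c d : ℝ) (T : ℝ → ℝ) : Prop where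
  source_pos : ∀ x ∈ Ioo a b, 0 < p x
  target_pos : ∀ z ∈ Ioo c d, 0 < q z
  continuous : Continuous T
  mem_Icc : ∀ x, T x ∈ Icc c d
  map_left : T a = c
  map_right : T b = d
  mem_Ioo : ∀ x ∈ Ioo a b, T x ∈ Ioo c d
  hasDerivAt : ∀ x ∈ Ioo a b, HasDerivAt T (p x / q (T x)) x

section Transport

variable {p q : ℝ → ℝ} {a b c d : ℝ}

theorem exists_isTransportMap (hab : a < b) (hcd : c < d) (hp : Continuous p) (hq : Continuous q)
    (hp_pos : ∀ x ∈ Ioo a b, 0 < p x) (hq_pos : ∀ z ∈ Ioo c d, 0 < q z)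
    (hmass : ∫ x in a..b, p x = ∫ z in c..d, q z) : ∃ T, IsTransportMap p q a b c d T := by
  set P : ℝ → ℝ := fun x => ∫ ξ in a..x, p ξ
  set Q : ℝ → ℝ := fun z => ∫ ζ in c..z, q ζ
  have hP_deriv (x : ℝ) : HasDerivAt P (p x) x := hp.integral_hasStrictDerivAt a x |>.hasDerivAt
  have hQ_deriv (z : ℝ) : HasDerivAt Q (q z) z := hq.integral_hasStrictDerivAt c z |>.hasDerivAt
  have hP_cont : Continuous P := continuous_iff_continuousAt.2 fun x => (hP_deriv x).continuousAt
  have hQ_cont : Continuous Q := continuous_iff_continuousAt.2 fun z => (hQ_deriv z).continuousAt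
  have hP_mono : StrictMonoOn P (Icc a b) := strictMonoOn_intervalIntegral hp hp_pos
  have hQ_mono : StrictMonoOn Q (Icc c d) := strictMonoOn_intervalIntegral hq hq_pos
  have hc : c ∈ Icc c d := left_mem_Icc.2 hcd.le
  have hd : d ∈ Icc c d := right_mem_Icc.2 hcd.le
  have hleft : Q c = P a := by simp only [P, Q, intervalIntegral.integral_same]
  have hright : Q d = P b := hmass.symm
  obtain ⟨R, hR_cont, hR_mem, hQR⟩ :=
    exists_continuous_inverse_of_strictMonoOn hcd.le hQ_cont.continuousOn hQ_mono
  rw [hleft, hright] at hQR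
  have hQT {x : ℝ} (hx : x ∈ Icc a b) : Q (R (P x)) = P x :=
    hQR _ (hP_mono.monotoneOn.image_Icc_subset (mem_image_of_mem P hx))
  have ha : a ∈ Icc a b := left_mem_Icc.2 hab.le
  have hb : b ∈ Icc a b := right_mem_Icc.2 hab.le
  have hT_mem {x : ℝ} (hx : x ∈ Ioo a b) : R (P x) ∈ Ioo c d := by
    have hx' := Ioo_subset_Icc_self hx
    rw [mem_Ioo, ← hQ_mono.lt_iff_lt hc (hR_mem _), ← hQ_mono.lt_iff_lt (hR_mem _) hd,
      hQT hx', hleft, hright]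
    exact ⟨hP_mono ha hx' hx.1, hP_mono hx' hb hx.2⟩
  refine ⟨R ∘ P, hp_pos, hq_pos, hR_cont.comp hP_cont, fun x => hR_mem _,
    hQ_mono.injOn (hR_mem _) hc ((hQT ha).trans hleft.symm),
    hQ_mono.injOn (hR_mem _) hd ((hQT hb).trans hright.symm), fun x hx => hT_mem hx,
    fun x hx => ?_⟩
  have hR_deriv : HasDerivAt R (q (R (P x)))⁻¹ (P x) := by
    refine (hQ_deriv _).of_local_left_inverse hR_cont.continuousAt (hq_pos _ (hT_mem hx)).ne' ?_
    filter_upwards [Ioo_mem_nhds (hP_mono ha (Ioo_subset_Icc_self hx) hx.1)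
      (hP_mono (Ioo_subset_Icc_self hx) hb hx.2)] with y hy using hQR y (Ioo_subset_Icc_self hy)
  rw [div_eq_inv_mul]
  exact hR_deriv.comp x (hP_deriv x)

namespace IsTransportMap

variable {T φ : ℝ → ℝ} (hT : IsTransportMap p q a b c d T)
include hT

lemma deriv_pos {x : ℝ} (hx : x ∈ Ioo a b) : 0 < p x / q (T x) :=
  div_pos (hT.source_pos x hx) (hT.target_pos _ (hT.mem_Ioo x hx))

lemma intervalIntegrable_deriv (hab : a ≤ b) :
    IntervalIntegrable (fun x => p x / q (T x)) volume a b := by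
  rw [intervalIntegrable_iff_integrableOn_Ioc_of_le hab]
  exact intervalIntegral.integrableOn_deriv_of_nonneg hT.continuous.continuousOn hT.hasDerivAt
    fun x hx => (hT.deriv_pos hx).le

lemma integral_deriv_mul_comp (hab : a ≤ b) (φ : ℝ → ℝ) :
    ∫ x in a..b, p x / q (T x) * φ (T x) = ∫ z in c..d, φ z := by
  have h := intervalIntegral.integral_deriv_smul_comp_of_deriv_nonneg (g := φ)
    hT.continuous.continuousOn
    (by rw [min_eq_left hab, max_eq_right hab]; exact hT.hasDerivAt)
    (by rw [min_eq_left hab, max_eq_right hab]; exact fun x hx => (hT.deriv_pos hx).le)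
  rwa [hT.map_left, hT.map_right] at h

lemma integral_mul_comp (hab : a ≤ b) (φ : ℝ → ℝ) :
    ∫ x in a..b, p x * φ (T x) = ∫ z in c..d, q z * φ z := by
  rw [← hT.integral_deriv_mul_comp hab]
  refine intervalIntegral.integral_congr_Ioo_of_le hab fun x hx => ?_
  have hq := (hT.target_pos _ (hT.mem_Ioo x hx)).ne'
  field_simp

end IsTransportMap

end Transport

section OneDimensional

variable {a b κ : ℝ} {v v' : ℝ → ℝ}

lemma memLp_two_intervalIntegrable (hab : a ≤ b) (h : MemLp v' 2 (volume.restrict (Ioc a b))) :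
    IntervalIntegrable v' volume a b ∧ IntervalIntegrable (fun y => v' y ^ 2) volume a b := by
  simp only [intervalIntegrable_iff_integrableOn_Ioc_of_le hab]
  exact ⟨h.integrable one_le_two, h.integrable_sq⟩

theorem integral_exp_mul_deriv_le {T T' : ℝ → ℝ} (hab : a ≤ b) (hκ : 0 < κ)
    (hv : ContinuousOn v (Icc a b)) (hva : v a = 0) (hvb : v b = 0)
    (hvd : ∀ y ∈ Ioo a b, HasDerivAt v (v' y) y)
    (hv' : MemLp v' 2 (volume.restrict (Ioc a b)))
    (hT : ContinuousOn T (Icc a b)) (hTd : ∀ y ∈ Ioo a b, HasDerivAt T (T' y) y)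
    (hT' : IntervalIntegrable T' volume a b) :
    ∫ y in a..b, exp (v y) * T' y ≤ T b - T a + κ⁻¹ / 2 * (∫ y in a..b, v' y ^ 2)
      + κ / 2 * ∫ y in a..b, exp (2 * v y) * T y ^ 2 := by
  obtain ⟨hv'_int, hv'_sq⟩ := memLp_two_intervalIntegrable hab hv'
  have hexpT : ContinuousOn (fun y => exp (v y) * T y) (uIcc a b) := by
    rw [uIcc_of_le hab]; fun_prop
  have hexp : IntervalIntegrable (fun y => exp (v y) * T' y) volume a b :=
    hT'.continuousOn_mul (by rw [uIcc_of_le hab]; fun_prop)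
  have hcross : IntervalIntegrable (fun y => exp (v y) * T y * v' y) volume a b :=
    hv'_int.continuousOn_mul hexpT
  have hmass : IntervalIntegrable (fun y => exp (2 * v y) * T y ^ 2) volume a b :=
    ContinuousOn.intervalIntegrable (by rw [uIcc_of_le hab]; fun_prop)
  have hparts : (∫ y in a..b, exp (v y) * T' y) + ∫ y in a..b, exp (v y) * T y * v' y
      = T b - T a := by
    rw [← intervalIntegral.integral_add hexp hcross,
      intervalIntegral.integral_eq_sub_of_hasDerivAt_of_le hab (uIcc_of_le hab ▸ hexpT)
        (fun y hy => ?_) (hexp.add hcross), hva, hvb, exp_zero, one_mul, one_mul]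
    exact ((hvd y hy).exp.mul (hTd y hy)).congr_deriv (by ring)
  have hyoung : -∫ y in a..b, exp (v y) * T y * v' y ≤ κ⁻¹ / 2 * (∫ y in a..b, v' y ^ 2)
      + κ / 2 * ∫ y in a..b, exp (2 * v y) * T y ^ 2 := by
    rw [← intervalIntegral.integral_neg, ← intervalIntegral.integral_const_mul,
      ← intervalIntegral.integral_const_mul,
      ← intervalIntegral.integral_add (hv'_sq.const_mul _) (hmass.const_mul _)]
    refine intervalIntegral.integral_mono hab hcross.neg
      ((hv'_sq.const_mul _).add (hmass.const_mul _)) fun y => ?_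
    have h := two_mul_le_add_mul_sq (a := exp (v y) * T y) (b := -v' y) hκ
    have hexp_sq : exp (2 * v y) = exp (v y) ^ 2 := by rw [two_mul, exp_add, sq]
    simp only [hexp_sq]
    linarith
  linarith

lemma mul_div_le_half_exp_mul_add {g k : ℝ} (v : ℝ) (hg : 0 < g) (hk : 0 < k) :
    exp (2 * v) / (k * g ^ 2) * (k * g)
      ≤ (k * exp v + exp v * (exp (2 * v) / (k * g ^ 2))) / 2 := by
  have hgap : (k * exp v + exp v * (exp (2 * v) / (k * g ^ 2))) / 2
      - exp (2 * v) / (k * g ^ 2) * (k * g) = exp v / (2 * k * g ^ 2) * (k * g - exp v) ^ 2 := by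
    rw [two_mul, exp_add]
    field_simp
    ring
  have : 0 ≤ exp v / (2 * k * g ^ 2) * (k * g - exp v) ^ 2 := by positivity
  linarith

theorem mul_integral_le_of_transport {c d k : ℝ} {g : ℝ → ℝ} (hab : a < b) (hcd : c < d)
    (hk : 0 < k) (hκ : 0 < κ) (hv : Continuous v) (hva : v a = 0) (hvb : v b = 0)
    (hvd : ∀ y ∈ Ioo a b, HasDerivAt v (v' y) y)
    (hv' : MemLp v' 2 (volume.restrict (Ioc a b)))
    (hg : Continuous g) (hg_pos : ∀ z, 0 < g z)
    (hmass : ∫ y in a..b, exp (2 * v y) = k * ∫ z in c..d, g z ^ 2) :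
    k * ∫ z in c..d, g z ≤ k / 2 * (∫ y in a..b, exp (v y)) + (d - c) / 2
      + κ⁻¹ / 4 * (∫ y in a..b, v' y ^ 2) + κ / 4 * (k * ∫ z in c..d, g z ^ 2 * z ^ 2) := by
  obtain ⟨S, hS⟩ := exists_isTransportMap (p := fun y => exp (2 * v y))
    (q := fun z => k * g z ^ 2) hab hcd (by fun_prop) (by fun_prop) (fun _ _ => exp_pos _)
    (fun z _ => mul_pos hk (pow_pos (hg_pos z) 2))
    (by rw [hmass, intervalIntegral.integral_const_mul])
  set S' : ℝ → ℝ := fun y => exp (2 * v y) / (k * g (S y) ^ 2)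
  have hS_cont := hS.continuous
  have hS'_cont : Continuous S' := Continuous.div (by fun_prop) (by fun_prop)
    fun y => (mul_pos hk (pow_pos (hg_pos _) 2)).ne'
  have hparts := integral_exp_mul_deriv_le hab.le hκ hv.continuousOn hva hvb hvd hv'
    hS_cont.continuousOn hS.hasDerivAt (hS.intervalIntegrable_deriv hab.le)
  have hmoment : ∫ y in a..b, exp (2 * v y) * S y ^ 2 = k * ∫ z in c..d, g z ^ 2 * z ^ 2 := by
    rw [hS.integral_mul_comp hab.le (fun z => z ^ 2), ← intervalIntegral.integral_const_mul]
    simp only [mul_assoc]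
  have hamgm : k * ∫ z in c..d, g z
      ≤ (k * (∫ y in a..b, exp (v y)) + ∫ y in a..b, exp (v y) * S' y) / 2 :=
    calc k * ∫ z in c..d, g z = ∫ y in a..b, S' y * (k * g (S y)) := by
          rw [hS.integral_deriv_mul_comp hab.le (fun z => k * g z),
            intervalIntegral.integral_const_mul]
      _ ≤ ∫ y in a..b, (k * exp (v y) + exp (v y) * S' y) / 2 :=
          intervalIntegral.integral_mono hab.le
            (Continuous.intervalIntegrable (by fun_prop) _ _)
            (Continuous.intervalIntegrable (by fun_prop) _ _)
            fun y => mul_div_le_half_exp_mul_add (v y) (hg_pos (S y)) hk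
      _ = (k * (∫ y in a..b, exp (v y)) + ∫ y in a..b, exp (v y) * S' y) / 2 := by
          rw [intervalIntegral.integral_div, intervalIntegral.integral_add
            (Continuous.intervalIntegrable (by fun_prop) _ _)
            (Continuous.intervalIntegrable (by fun_prop) _ _), intervalIntegral.integral_const_mul]
  rw [hmoment, hS.map_left, hS.map_right] at hparts
  linarith

end OneDimensional

/-- The open unit disk of the plane, in the coordinates in which Fubini's theorem is applied. -/
def unitDisk : Set (ℝ × ℝ) := {p | p.1 ^ 2 + p.2 ^ 2 < 1}

/-- The integral of `F` over the vertical chord of the unit disk with abscissa `x`. It vanishes for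
`|x| ≥ 1`, where `√(1 - x ^ 2) = 0`. -/
noncomputable def fiberIntegral (F : ℝ × ℝ → ℝ) (x : ℝ) : ℝ :=
  ∫ y in -√(1 - x ^ 2)..√(1 - x ^ 2), F (x, y)

section UnitDisk

variable {F : ℝ × ℝ → ℝ} {x : ℝ}

lemma mem_unitDisk {p : ℝ × ℝ} : p ∈ unitDisk ↔ p.1 ^ 2 + p.2 ^ 2 < 1 := Iff.rfl

lemma isOpen_unitDisk : IsOpen unitDisk :=
  isOpen_lt (by fun_prop) continuous_const

lemma unitDisk_subset_Icc_prod_Icc : unitDisk ⊆ Icc (-1) 1 ×ˢ Icc (-1) 1 := fun p hp => by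
  rw [mem_unitDisk] at hp
  exact ⟨abs_le.1 (by nlinarith [sq_abs p.1, sq_nonneg p.2]),
    abs_le.1 (by nlinarith [sq_abs p.2, sq_nonneg p.1])⟩

lemma integrableOn_unitDisk_of_continuous (hF : Continuous F) : IntegrableOn F unitDisk :=
  (hF.continuousOn.integrableOn_compact (isCompact_Icc.prod isCompact_Icc)).mono_set
    unitDisk_subset_Icc_prod_Icc

lemma integrableOn_unitDisk_mul_fst {h : ℝ → ℝ} (hF : Continuous F)
    (hh : IntervalIntegrable h volume (-1) 1) : IntegrableOn (fun p => F p * h p.1) unitDisk := by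
  have hsquare : IntegrableOn (fun p : ℝ × ℝ => h p.1) (Icc (-1) 1 ×ˢ Icc (-1) 1) := by
    rw [intervalIntegrable_iff_integrableOn_Icc_of_le (by norm_num)] at hh
    rw [IntegrableOn, Measure.volume_eq_prod, ← Measure.prod_restrict]
    exact hh.comp_fst _
  exact (hsquare.continuousOn_mul hF.continuousOn (isCompact_Icc.prod isCompact_Icc)).mono_set
    unitDisk_subset_Icc_prod_Icc

lemma sqrt_one_sub_sq_pos (hx : x ∈ Ioo (-1) 1) : 0 < √(1 - x ^ 2) :=
  sqrt_pos.2 (by nlinarith [hx.1, hx.2])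

lemma sqrt_one_sub_sq_le_one (x : ℝ) : √(1 - x ^ 2) ≤ 1 :=
  sqrt_le_one.2 (sub_le_self 1 (sq_nonneg x))

lemma sq_add_sq_sqrt_one_sub_sq (hx : x ∈ Ioo (-1) 1) : x ^ 2 + √(1 - x ^ 2) ^ 2 = 1 := by
  rw [sq_sqrt (sqrt_pos.1 (sqrt_one_sub_sq_pos hx)).le, add_sub_cancel]

lemma neg_sqrt_le_sqrt (x : ℝ) : -√x ≤ √x := neg_le_self (sqrt_nonneg x)

lemma mk_mem_unitDisk_iff {y : ℝ} :
    (x, y) ∈ unitDisk ↔ y ∈ Ioo (-√(1 - x ^ 2)) √(1 - x ^ 2) := by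
  rw [mem_Ioo, ← abs_lt, lt_sqrt (abs_nonneg y), sq_abs, mem_unitDisk, lt_sub_iff_add_lt']

lemma mk_notMem_unitDisk_of_notMem_Ioo (hx : x ∉ Ioo (-1) 1) (y : ℝ) : (x, y) ∉ unitDisk := by
  contrapose hx
  rw [mem_unitDisk] at hx
  exact abs_lt.1 (by nlinarith [sq_abs x, sq_nonneg y])

lemma swap_preimage_unitDisk : Prod.swap ⁻¹' unitDisk = unitDisk := by
  ext p
  rw [mem_preimage, mem_unitDisk, mem_unitDisk, Prod.fst_swap, Prod.snd_swap, add_comm]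

lemma measurePreserving_swap_restrict_unitDisk :
    MeasurePreserving Prod.swap (volume.restrict unitDisk) (volume.restrict unitDisk) := by
  have h := (Measure.measurePreserving_swap (μ := (volume : Measure ℝ))
    (ν := (volume : Measure ℝ))).restrict_preimage isOpen_unitDisk.measurableSet
  rwa [swap_preimage_unitDisk] at h

lemma setIntegral_unitDisk_comp_swap (F : ℝ × ℝ → ℝ) :
    ∫ p in unitDisk, F p.swap = ∫ p in unitDisk, F p :=
  measurePreserving_swap_restrict_unitDisk.integral_comp
    MeasurableEquiv.prodComm.measurableEmbedding F

lemma integrableOn_unitDisk_mul_snd {h : ℝ → ℝ} (hF : Continuous F)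
    (hh : IntervalIntegrable h volume (-1) 1) : IntegrableOn (fun p => F p * h p.2) unitDisk :=
  measurePreserving_swap_restrict_unitDisk.integrable_comp_of_integrable
    (integrableOn_unitDisk_mul_fst (hF.comp continuous_swap) hh)

lemma indicator_unitDisk_mk (F : ℝ × ℝ → ℝ) (x : ℝ) :
    (fun y => unitDisk.indicator F (x, y))
      = (Ioo (-√(1 - x ^ 2)) √(1 - x ^ 2)).indicator fun y => F (x, y) := by
  funext y
  simp only [indicator, mk_mem_unitDisk_iff]

lemma integral_indicator_unitDisk (F : ℝ × ℝ → ℝ) (x : ℝ) :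
    ∫ y, unitDisk.indicator F (x, y) = fiberIntegral F x := by
  rw [fiberIntegral, intervalIntegral.integral_of_le (neg_sqrt_le_sqrt _),
    integral_Ioc_eq_integral_Ioo, ← integral_indicator measurableSet_Ioo, indicator_unitDisk_mk]

lemma fiberIntegral_eq_zero (F : ℝ × ℝ → ℝ) (hx : x ∉ Ioo (-1) 1) : fiberIntegral F x = 0 := by
  simp only [← integral_indicator_unitDisk, indicator, mk_notMem_unitDisk_of_notMem_Ioo hx,
    if_false, integral_zero]

lemma intervalIntegrable_fiberIntegral (hF : IntegrableOn F unitDisk) :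
    IntervalIntegrable (fiberIntegral F) volume (-1) 1 := by
  have h := ((integrable_indicator_iff isOpen_unitDisk.measurableSet).2 hF).integral_prod_left
  simp only [integral_indicator_unitDisk] at h
  exact h.intervalIntegrable

theorem setIntegral_unitDisk_eq_integral_fiberIntegral (hF : IntegrableOn F unitDisk) :
    ∫ p in unitDisk, F p = ∫ x in -1..1, fiberIntegral F x := by
  have hD := isOpen_unitDisk.measurableSet
  rw [← integral_indicator hD, Measure.volume_eq_prod,
    integral_prod _ ((integrable_indicator_iff hD).2 hF),
    intervalIntegral.integral_of_le (by norm_num), integral_Ioc_eq_integral_Ioo]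
  simp only [integral_indicator_unitDisk]
  exact (setIntegral_eq_integral_of_forall_compl_eq_zero
    fun x hx => fiberIntegral_eq_zero F hx).symm

lemma continuous_fiberIntegral (hF : Continuous F) : Continuous (fiberIntegral F) := by
  have hprim {s : ℝ → ℝ} (hs : Continuous s) : Continuous fun x => ∫ y in 0..s x, F (x, y) :=
    intervalIntegral.continuous_parametric_intervalIntegral_of_continuous
      (f := fun x y => F (x, y)) hF hs
  have hsub : fiberIntegral F = fun x =>
      (∫ y in 0..√(1 - x ^ 2), F (x, y)) - ∫ y in 0..-√(1 - x ^ 2), F (x, y) := by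
    funext x
    exact (intervalIntegral.integral_interval_sub_left
      (Continuous.intervalIntegrable (by fun_prop) _ _)
      (Continuous.intervalIntegrable (by fun_prop) _ _)).symm
  rw [hsub]
  exact (hprim (by fun_prop)).sub (hprim (by fun_prop))

lemma fiberIntegral_pos (hF : Continuous F) (hF_pos : ∀ p, 0 < F p) (hx : x ∈ Ioo (-1) 1) :
    0 < fiberIntegral F x :=
  intervalIntegral.intervalIntegral_pos_of_pos (Continuous.intervalIntegrable (by fun_prop) _ _)
    (fun _ => hF_pos _) (neg_lt_self (sqrt_one_sub_sq_pos hx))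

lemma fiberIntegral_mul_fst (F : ℝ × ℝ → ℝ) (h : ℝ → ℝ) (x : ℝ) :
    fiberIntegral (fun p => F p * h p.1) x = fiberIntegral F x * h x := by
  simp only [fiberIntegral, intervalIntegral.integral_mul_const]

lemma ae_memLp_two_fiber (hF : MemLp F 2 (volume.restrict unitDisk)) :
    ∀ᵐ x, MemLp (fun y => F (x, y)) 2
      (volume.restrict (Ioc (-√(1 - x ^ 2)) √(1 - x ^ 2))) := by
  have hD := isOpen_unitDisk.measurableSet
  have hG : MemLp (unitDisk.indicator F) 2 ((volume : Measure ℝ).prod volume) :=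
    (memLp_indicator_iff_restrict hD).2 hF
  filter_upwards [hG.aestronglyMeasurable.prodMk_left, hG.integrable_sq.prod_right_ae]
    with x hmeas hsq
  rw [← Measure.restrict_congr_set Ioo_ae_eq_Ioc,
    ← memLp_indicator_iff_restrict measurableSet_Ioo, ← indicator_unitDisk_mk]
  exact (memLp_two_iff_integrable_sq hmeas).2 hsq

end UnitDisk

section Boundary

variable {f T : ℝ → ℝ}

lemma integral_zero_one_eq_integral_comp_cos_mul_sin (hf : Continuous f) :
    ∫ x in 0..1, f x = ∫ θ in 0..π / 2, f (cos θ) * sin θ := by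
  have h := intervalIntegral.integral_comp_mul_deriv (a := 0) (b := π / 2)
    (fun θ _ => hasDerivAt_cos θ) (by fun_prop) hf
  simp only [cos_zero, cos_pi_div_two, Function.comp_apply, mul_neg,
    intervalIntegral.integral_neg] at h
  rw [intervalIntegral.integral_symm, ← h, neg_neg]

lemma integral_comp_sqrt_one_sub_sq (hf : Continuous f) :
    ∫ y in 0..1, f √(1 - y ^ 2) = ∫ θ in 0..π / 2, f (cos θ) * cos θ := by
  have h := intervalIntegral.integral_comp_mul_deriv (a := 0) (b := π / 2)
    (g := fun y => f √(1 - y ^ 2)) (fun θ _ => hasDerivAt_sin θ) (by fun_prop) (by fun_prop)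
  rw [sin_zero, sin_pi_div_two] at h
  rw [← h]
  refine intervalIntegral.integral_congr_Ioo_of_le (by positivity) fun θ hθ => ?_
  rw [Function.comp_apply, ← cos_eq_sqrt_one_sub_sin_sq (by linarith [hθ.1, pi_pos]) hθ.2.le]

lemma mul_cos_add_sqrt_mul_sin_le_one {τ : ℝ} (hτ : τ ∈ Icc (-1) 1) (θ : ℝ) :
    τ * cos θ + √(1 - τ ^ 2) * sin θ ≤ 1 := by
  have hsqrt : √(1 - τ ^ 2) ^ 2 = 1 - τ ^ 2 := sq_sqrt (by nlinarith [hτ.1, hτ.2])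
  linarith [two_mul_le_add_sq τ (cos θ), two_mul_le_add_sq √(1 - τ ^ 2) (sin θ),
    sin_sq_add_cos_sq θ]

lemma integral_comp_sqrt_add_integral_sqrt_le (hT : Continuous T) (hmem : ∀ x, T x ∈ Icc (-1) 1) :
    (∫ y in 0..1, T √(1 - y ^ 2)) + ∫ x in 0..1, √(1 - T x ^ 2) ≤ π / 2 := by
  rw [integral_comp_sqrt_one_sub_sq hT, integral_zero_one_eq_integral_comp_cos_mul_sin
    (f := fun x => √(1 - T x ^ 2)) (by fun_prop), ← intervalIntegral.integral_add
    (Continuous.intervalIntegrable (by fun_prop) _ _)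
    (Continuous.intervalIntegrable (by fun_prop) _ _)]
  calc ∫ θ in 0..π / 2, (T (cos θ) * cos θ + √(1 - T (cos θ) ^ 2) * sin θ)
      ≤ ∫ _ in 0..π / 2, (1 : ℝ) :=
        intervalIntegral.integral_mono (by positivity)
          (Continuous.intervalIntegrable (by fun_prop) _ _) intervalIntegrable_const
          fun θ => mul_cos_add_sqrt_mul_sin_le_one (hmem _) θ
    _ = π / 2 := by rw [intervalIntegral.integral_const, sub_zero, smul_eq_mul, mul_one]

lemma integral_neg_one_one_eq_add (hf : Continuous f) :
    ∫ x in -1..1, f x = (∫ x in 0..1, f x) + ∫ x in 0..1, f (-x) := by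
  rw [intervalIntegral.integral_comp_neg, neg_zero, add_comm,
    intervalIntegral.integral_add_adjacent_intervals (hf.intervalIntegrable _ _)
      (hf.intervalIntegrable _ _)]

/-- The left-hand side is half the flux through the unit circle of the unit-length field
`(T x, ±√(1 - T x ^ 2))`, hence at most half the length of the circle. -/
theorem half_integral_sub_add_integral_sqrt_le_pi (hT : Continuous T)
    (hmem : ∀ x, T x ∈ Icc (-1) 1) :
    (∫ y in -1..1, (T √(1 - y ^ 2) - T (-√(1 - y ^ 2)))) / 2 + ∫ x in -1..1, √(1 - T x ^ 2)
      ≤ π := by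
  have hright := integral_comp_sqrt_add_integral_sqrt_le hT hmem
  have hleft := integral_comp_sqrt_add_integral_sqrt_le (T := fun x => -T (-x)) (by fun_prop)
    fun x => ⟨neg_le_neg (hmem (-x)).2, neg_le.1 (hmem (-x)).1⟩
  simp only [neg_sq, intervalIntegral.integral_neg] at hleft
  rw [integral_neg_one_one_eq_add (by fun_prop), integral_neg_one_one_eq_add (by fun_prop)]
  simp only [neg_sq]
  rw [intervalIntegral.integral_sub (Continuous.intervalIntegrable (by fun_prop) _ _)
    (Continuous.intervalIntegrable (by fun_prop) _ _)]
  linarith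

end Boundary

section Knothe

variable {F H : ℝ × ℝ → ℝ} {T : ℝ → ℝ}

theorem IsTransportMap.setIntegral_mul_comp_fst
    (hT : IsTransportMap (fiberIntegral F) (fiberIntegral H) (-1) 1 (-1) 1 T)
    (hF : Continuous F) (hH : Continuous H) {φ : ℝ → ℝ} (hφ : Continuous φ) :
    ∫ p in unitDisk, F p * φ (T p.1) = ∫ p in unitDisk, H p * φ p.1 := by
  have hTφ : Continuous fun x => φ (T x) := hφ.comp hT.continuous
  rw [setIntegral_unitDisk_eq_integral_fiberIntegral
      (integrableOn_unitDisk_mul_fst hF (hTφ.intervalIntegrable _ _)),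
    setIntegral_unitDisk_eq_integral_fiberIntegral
      (integrableOn_unitDisk_mul_fst hH (hφ.intervalIntegrable _ _))]
  simp only [fiberIntegral_mul_fst _ fun x => φ (T x), fiberIntegral_mul_fst _ φ]
  exact hT.integral_mul_comp (by norm_num) φ

variable {u ux uy : ℝ × ℝ → ℝ} {κ : ℝ}

section Slicing

variable (hκ : 0 < κ) (hu : Continuous u) (hu_zero : ∀ p : ℝ × ℝ, p.1 ^ 2 + p.2 ^ 2 = 1 → u p = 0)
  (hy : ∀ p ∈ unitDisk, HasDerivAt (fun y => u (p.1, y)) (uy p) p.2)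
include hκ hu hu_zero hy

lemma mul_fiberIntegral_le_of_fiberIntegral_eq {g : ℝ × ℝ → ℝ} {x ξ k : ℝ} (hg : Continuous g)
    (hg_pos : ∀ p, 0 < g p) (hx : x ∈ Ioo (-1) 1) (hξ : ξ ∈ Ioo (-1) 1) (hk : 0 < k)
    (huy : MemLp (fun y => uy (x, y)) 2 (volume.restrict (Ioc (-√(1 - x ^ 2)) √(1 - x ^ 2))))
    (hmass : fiberIntegral (fun p => exp (2 * u p)) x = k * fiberIntegral (fun p => g p ^ 2) ξ) :
    k * fiberIntegral g ξ ≤ fiberIntegral (fun p => exp (u p)) x * k / 2 + √(1 - ξ ^ 2)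
      + κ⁻¹ / 4 * fiberIntegral (fun p => uy p ^ 2) x
      + κ / 4 * (k * fiberIntegral (fun p => g p ^ 2 * p.2 ^ 2) ξ) := by
  have h := mul_integral_le_of_transport (neg_lt_self (sqrt_one_sub_sq_pos hx))
    (neg_lt_self (sqrt_one_sub_sq_pos hξ)) hk hκ (v := fun y => u (x, y)) (by fun_prop)
    (hu_zero _ (by rw [neg_sq, sq_add_sq_sqrt_one_sub_sq hx]))
    (hu_zero _ (sq_add_sq_sqrt_one_sub_sq hx))
    (fun y hy_mem => hy _ (mk_mem_unitDisk_iff.2 hy_mem)) huy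
    (g := fun z => g (ξ, z)) (by fun_prop) (fun z => hg_pos _) hmass
  simp only [fiberIntegral]
  linarith

variable (huy : MemLp uy 2 (volume.restrict unitDisk))
include huy

theorem setIntegral_exp_mul_deriv_snd_le {T' : ℝ → ℝ} (hT : Continuous T)
    (hTd : ∀ y ∈ Ioo (-1) 1, HasDerivAt T (T' y) y) (hT' : IntervalIntegrable T' volume (-1) 1) :
    ∫ p in unitDisk, exp (u p) * T' p.2 ≤ (∫ x in -1..1, (T √(1 - x ^ 2) - T (-√(1 - x ^ 2))))
      + κ⁻¹ / 2 * (∫ p in unitDisk, uy p ^ 2)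
      + κ / 2 * ∫ p in unitDisk, exp (2 * u p) * T p.2 ^ 2 := by
  have hexp : IntegrableOn (fun p => exp (u p) * T' p.2) unitDisk :=
    integrableOn_unitDisk_mul_snd (by fun_prop) hT'
  have henergy : IntegrableOn (fun p => uy p ^ 2) unitDisk := huy.integrable_sq
  have hmass : IntegrableOn (fun p => exp (2 * u p) * T p.2 ^ 2) unitDisk :=
    integrableOn_unitDisk_of_continuous (by fun_prop)
  simp only [setIntegral_unitDisk_eq_integral_fiberIntegral, hexp, henergy, hmass]
  refine intervalIntegral_le_add_of_ae_Ioo (by norm_num) (intervalIntegrable_fiberIntegral hexp)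
    (Continuous.intervalIntegrable (by fun_prop) _ _) (intervalIntegrable_fiberIntegral henergy)
    (intervalIntegrable_fiberIntegral hmass) ?_
  filter_upwards [ae_memLp_two_fiber huy] with x hslice hx
  have hle : √(1 - x ^ 2) ≤ 1 := sqrt_one_sub_sq_le_one x
  refine integral_exp_mul_deriv_le (neg_sqrt_le_sqrt _) hκ (by fun_prop)
    (hu_zero _ (by rw [neg_sq, sq_add_sq_sqrt_one_sub_sq hx]))
    (hu_zero _ (sq_add_sq_sqrt_one_sub_sq hx))
    (fun y hy_mem => hy _ (mk_mem_unitDisk_iff.2 hy_mem)) hslice hT.continuousOn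
    (fun y hy_mem => hTd y (Ioo_subset_Ioo (neg_le_neg hle) hle hy_mem)) (hT'.mono_set ?_)
  rw [uIcc_of_le (neg_sqrt_le_sqrt _), uIcc_of_le (by norm_num)]
  exact Icc_subset_Icc (neg_le_neg hle) hle

theorem IsTransportMap.setIntegral_le_of_fiberIntegral {g : ℝ × ℝ → ℝ} (hg : Continuous g)
    (hg_pos : ∀ p, 0 < g p)
    (hT : IsTransportMap (fiberIntegral fun p => exp (2 * u p)) (fiberIntegral fun p => g p ^ 2)
      (-1) 1 (-1) 1 T) :
    ∫ p in unitDisk, g p ≤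
      (∫ p in unitDisk, exp (u p) * (fiberIntegral (fun p => exp (2 * u p)) p.1
        / fiberIntegral (fun p => g p ^ 2) (T p.1))) / 2
      + (∫ x in -1..1, √(1 - T x ^ 2)) + κ⁻¹ / 4 * (∫ p in unitDisk, uy p ^ 2)
      + κ / 4 * ∫ p in unitDisk, g p ^ 2 * p.2 ^ 2 := by
  set T' : ℝ → ℝ := fun x =>
    fiberIntegral (fun p => exp (2 * u p)) x / fiberIntegral (fun p => g p ^ 2) (T x)
  have hT' : IntervalIntegrable T' volume (-1) 1 := hT.intervalIntegrable_deriv (by norm_num)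
  have hT_cont := hT.continuous
  have hexp : IntegrableOn (fun p => exp (u p) * T' p.1) unitDisk :=
    integrableOn_unitDisk_mul_fst (by fun_prop) hT'
  have henergy : IntegrableOn (fun p => uy p ^ 2) unitDisk := huy.integrable_sq
  have hcomp {f : ℝ × ℝ → ℝ} (hf : Continuous f) :
      IntervalIntegrable (fun x => T' x * fiberIntegral f (T x)) volume (-1) 1 :=
    hT'.mul_continuousOn ((continuous_fiberIntegral hf).comp hT_cont).continuousOn
  have hsqrt : IntervalIntegrable (fun x => √(1 - T x ^ 2)) volume (-1) 1 :=
    Continuous.intervalIntegrable (by fun_prop) _ _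
  have htransport {f : ℝ × ℝ → ℝ} (hf : Continuous f) :
      ∫ p in unitDisk, f p = ∫ x in -1..1, T' x * fiberIntegral f (T x) := by
    rw [hT.integral_deriv_mul_comp (by norm_num), setIntegral_unitDisk_eq_integral_fiberIntegral
      (integrableOn_unitDisk_of_continuous hf)]
  rw [htransport hg, htransport (f := fun p => g p ^ 2 * p.2 ^ 2) (by fun_prop),
    setIntegral_unitDisk_eq_integral_fiberIntegral hexp,
    setIntegral_unitDisk_eq_integral_fiberIntegral henergy, ← intervalIntegral.integral_div,
    ← intervalIntegral.integral_add ((intervalIntegrable_fiberIntegral hexp).div_const 2) hsqrt]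
  refine intervalIntegral_le_add_of_ae_Ioo (by norm_num) (hcomp hg)
    (((intervalIntegrable_fiberIntegral hexp).div_const 2).add hsqrt)
    (intervalIntegrable_fiberIntegral henergy) (hcomp (by fun_prop)) ?_
  filter_upwards [ae_memLp_two_fiber huy] with x hslice hx
  rw [fiberIntegral_mul_fst]
  exact mul_fiberIntegral_le_of_fiberIntegral_eq hκ hu hu_zero hy hg hg_pos hx (hT.mem_Ioo x hx)
    (hT.deriv_pos hx) hslice
    (div_mul_cancel₀ _ (hT.target_pos _ (hT.mem_Ioo x hx)).ne').symm

end Slicing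

theorem setIntegral_unitDisk_le_pi_add_energy {g : ℝ × ℝ → ℝ} (hκ : 0 < κ) (hu : Continuous u)
    (hu_zero : ∀ p : ℝ × ℝ, p.1 ^ 2 + p.2 ^ 2 = 1 → u p = 0)
    (hx : ∀ p ∈ unitDisk, HasDerivAt (fun x => u (x, p.2)) (ux p) p.1)
    (hy : ∀ p ∈ unitDisk, HasDerivAt (fun y => u (p.1, y)) (uy p) p.2)
    (hux : MemLp ux 2 (volume.restrict unitDisk)) (huy : MemLp uy 2 (volume.restrict unitDisk))
    (hg : Continuous g) (hg_pos : ∀ p, 0 < g p)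
    (hmass : ∫ p in unitDisk, exp (2 * u p) = ∫ p in unitDisk, g p ^ 2) :
    ∫ p in unitDisk, g p ≤
      π + κ⁻¹ / 4 * ((∫ p in unitDisk, ux p ^ 2) + ∫ p in unitDisk, uy p ^ 2)
        + κ / 4 * ((∫ p in unitDisk, g p ^ 2 * p.1 ^ 2) + ∫ p in unitDisk, g p ^ 2 * p.2 ^ 2) := by
  have hexp : Continuous fun p => exp (2 * u p) := by fun_prop
  have hsq : Continuous fun p => g p ^ 2 := hg.pow 2
  obtain ⟨T, hT⟩ := exists_isTransportMap (a := -1) (b := 1) (c := -1) (d := 1) (by norm_num)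
    (by norm_num) (continuous_fiberIntegral hexp) (continuous_fiberIntegral hsq)
    (fun x hx => fiberIntegral_pos hexp (fun _ => exp_pos _) hx)
    (fun x hx => fiberIntegral_pos hsq (fun p => pow_pos (hg_pos p) 2) hx)
    (by rwa [← setIntegral_unitDisk_eq_integral_fiberIntegral
        (integrableOn_unitDisk_of_continuous hexp),
      ← setIntegral_unitDisk_eq_integral_fiberIntegral (integrableOn_unitDisk_of_continuous hsq)])
  have hvertical := hT.setIntegral_le_of_fiberIntegral hκ hu hu_zero hy huy hg hg_pos
  have hhorizontal := setIntegral_exp_mul_deriv_snd_le hκ (hu.comp continuous_swap)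
    (fun p hp => hu_zero p.swap ((add_comm _ _).trans hp))
    (fun p hp => hx p.swap (swap_preimage_unitDisk.ge hp))
    (hux.comp_measurePreserving measurePreserving_swap_restrict_unitDisk)
    hT.continuous hT.hasDerivAt (hT.intervalIntegrable_deriv (by norm_num))
  have hswap_exp := setIntegral_unitDisk_comp_swap fun p => exp (u p)
    * (fiberIntegral (fun p => exp (2 * u p)) p.1 / fiberIntegral (fun p => g p ^ 2) (T p.1))
  have hswap_energy := setIntegral_unitDisk_comp_swap fun p => ux p ^ 2
  have hswap_mass := setIntegral_unitDisk_comp_swap fun p => exp (2 * u p) * T p.1 ^ 2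
  have hmoment := hT.setIntegral_mul_comp_fst hexp hsq (continuous_pow 2)
  have hboundary := half_integral_sub_add_integral_sqrt_le_pi hT.continuous hT.mem_Icc
  simp only [Prod.fst_swap, Function.comp_apply] at hswap_exp hswap_energy hswap_mass hhorizontal
  rw [hswap_exp, hswap_energy, hswap_mass, hmoment] at hhorizontal
  linarith

end Knothe

/-- The coordinate identification of `ℝ × ℝ`, where Fubini's theorem is applied, with the Euclidean
plane. -/
noncomputable def prodEquivEuclidean : (ℝ × ℝ) ≃L[ℝ] EuclideanSpace ℝ (Fin 2) :=
  (ContinuousLinearEquiv.finTwoArrow ℝ ℝ).symm.trans (EuclideanSpace.equiv (Fin 2) ℝ).symm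

section Coordinates

lemma norm_prodEquivEuclidean_sq (p : ℝ × ℝ) : ‖prodEquivEuclidean p‖ ^ 2 = p.1 ^ 2 + p.2 ^ 2 := by
  rw [EuclideanSpace.real_norm_sq_eq, Fin.sum_univ_two]
  rfl

lemma norm_sq_eq_apply_prodEquivEuclidean (L : StrongDual ℝ (EuclideanSpace ℝ (Fin 2))) :
    ‖L‖ ^ 2 = L (prodEquivEuclidean (1, 0)) ^ 2 + L (prodEquivEuclidean (0, 1)) ^ 2 := by
  have hbasis_zero : EuclideanSpace.basisFun (Fin 2) ℝ 0 = prodEquivEuclidean (1, 0) := by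
    ext i; fin_cases i <;> simp [prodEquivEuclidean]
  have hbasis_one : EuclideanSpace.basisFun (Fin 2) ℝ 1 = prodEquivEuclidean (0, 1) := by
    ext i; fin_cases i <;> simp [prodEquivEuclidean]
  rw [(EuclideanSpace.basisFun (Fin 2) ℝ).norm_dual, Fin.sum_univ_two, hbasis_zero, hbasis_one]

lemma prodEquivEuclidean_preimage_ball : prodEquivEuclidean ⁻¹' ball 0 1 = unitDisk := by
  ext p
  rw [mem_preimage, mem_ball_zero_iff, mem_unitDisk, ← norm_prodEquivEuclidean_sq,
    sq_lt_one_iff₀ (norm_nonneg _)]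

lemma measurableEmbedding_prodEquivEuclidean : MeasurableEmbedding prodEquivEuclidean :=
  prodEquivEuclidean.toHomeomorph.measurableEmbedding

lemma measurePreserving_prodEquivEuclidean_restrict :
    MeasurePreserving prodEquivEuclidean (volume.restrict unitDisk)
      (volume.restrict (ball 0 1)) := by
  have h : MeasurePreserving prodEquivEuclidean volume volume :=
    (PiLp.volume_preserving_toLp (Fin 2)).comp (volume_preserving_finTwoArrow ℝ).symm
  rw [← prodEquivEuclidean_preimage_ball]
  exact h.restrict_preimage measurableSet_ball

lemma setIntegral_unitDisk_comp_prodEquivEuclidean (F : EuclideanSpace ℝ (Fin 2) → ℝ) :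
    ∫ p in unitDisk, F (prodEquivEuclidean p) = ∫ x in ball 0 1, F x :=
  measurePreserving_prodEquivEuclidean_restrict.integral_comp
    measurableEmbedding_prodEquivEuclidean F

theorem setIntegral_unitDisk_radial (φ : ℝ → ℝ) :
    ∫ p in unitDisk, φ (p.1 ^ 2 + p.2 ^ 2) = π * ∫ σ in 0..1, φ σ := by
  have hball : volume.real (ball (0 : EuclideanSpace ℝ (Fin 2)) 1) = π := by
    rw [Measure.real, EuclideanSpace.volume_ball_fin_two, ENNReal.ofReal_one, one_pow, one_mul,
      ENNReal.toReal_ofReal pi_nonneg]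
  have hsubst : ∫ ρ in 0..1, 2 * ρ * φ (ρ ^ 2) = ∫ σ in 0..1, φ σ := by
    have h := intervalIntegral.integral_deriv_smul_comp_of_deriv_nonneg (a := 0) (b := 1)
      (f := fun ρ => ρ ^ 2) (f' := fun ρ => 2 * ρ) (g := φ) (by fun_prop)
      (fun ρ _ => by simpa using hasDerivAt_pow 2 ρ)
      (fun ρ hρ => mul_nonneg zero_le_two ((le_min le_rfl zero_le_one).trans hρ.1.le))
    simpa using h
  have hindicator : (ball (0 : EuclideanSpace ℝ (Fin 2)) 1).indicator (fun x => φ (‖x‖ ^ 2))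
      = fun x => (Iio 1).indicator (fun ρ => φ (ρ ^ 2)) ‖x‖ := by
    ext x
    simp only [indicator, mem_ball_zero_iff, mem_Iio]
  have hmul (ρ : ℝ) : ρ * (Iio 1).indicator (fun ρ => φ (ρ ^ 2)) ρ
      = (Iio 1).indicator (fun ρ => ρ * φ (ρ ^ 2)) ρ :=
    (indicator_mul_right _ (fun ρ => ρ) _).symm
  calc ∫ p in unitDisk, φ (p.1 ^ 2 + p.2 ^ 2)
      = ∫ x in ball (0 : EuclideanSpace ℝ (Fin 2)) 1, φ (‖x‖ ^ 2) := by
        simp only [← setIntegral_unitDisk_comp_prodEquivEuclidean, norm_prodEquivEuclidean_sq]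
    _ = 2 * (π * ∫ ρ in Ioi 0, ρ * (Iio 1).indicator (fun ρ => φ (ρ ^ 2)) ρ) := by
        rw [← integral_indicator measurableSet_ball, hindicator, integral_fun_norm_addHaar, hball,
          finrank_euclideanSpace_fin]
        simp
    _ = π * ∫ ρ in 0..1, 2 * ρ * φ (ρ ^ 2) := by
        simp only [hmul, mul_assoc]
        rw [setIntegral_indicator measurableSet_Iio, Ioi_inter_Iio,
          intervalIntegral.integral_const_mul, intervalIntegral.integral_of_le zero_le_one,
          integral_Ioc_eq_integral_Ioo]
        ring
    _ = π * ∫ σ in 0..1, φ σ := by rw [hsubst]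

end Coordinates

/-- The extremal profile, as a function of the squared radius `σ`: up to scaling, `t ↦ bubble t`
are the conformal factors of the spherical caps over the unit disk, normalised to be `1` on its
boundary. -/
noncomputable def bubble (t σ : ℝ) : ℝ := (1 + t) / (1 + t * σ)

section Bubble

variable {t σ : ℝ}

lemma one_add_mul_pos (ht : 0 < t) (hσ : 0 ≤ σ) : 0 < 1 + t * σ := by positivity

lemma bubble_pos (ht : 0 < t) (hσ : 0 ≤ σ) : 0 < bubble t σ :=
  div_pos (by positivity) (one_add_mul_pos ht hσ)

lemma continuous_bubble_comp {X : Type*} [TopologicalSpace X] {s : X → ℝ} (ht : 0 < t)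
    (hs : Continuous s) (hs_nonneg : ∀ x, 0 ≤ s x) : Continuous fun x => bubble t (s x) :=
  continuous_const.div (by fun_prop) fun x => (one_add_mul_pos ht (hs_nonneg x)).ne'

lemma continuousOn_bubble (ht : 0 < t) : ContinuousOn (bubble t) (uIcc 0 1) :=
  continuousOn_const.div (by fun_prop) fun σ hσ =>
    (one_add_mul_pos ht (uIcc_of_le (zero_le_one' ℝ) ▸ hσ).1).ne'

lemma integral_bubble_sq (ht : 0 < t) : ∫ σ in 0..1, bubble t σ ^ 2 = 1 + t := by
  have hderiv : ∀ σ ∈ uIcc 0 1,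
      HasDerivAt (fun σ => (1 + t) ^ 2 * (σ / (1 + t * σ))) (bubble t σ ^ 2) σ := fun σ hσ => by
    rw [uIcc_of_le zero_le_one] at hσ
    have hpos := one_add_mul_pos ht hσ.1
    have hden : HasDerivAt (fun σ => 1 + t * σ) t σ := by
      simpa using ((hasDerivAt_id σ).const_mul t).const_add 1
    refine (((hasDerivAt_id σ).div hden hpos.ne').const_mul _).congr_deriv ?_
    rw [bubble, id]
    field_simp
    ring
  rw [intervalIntegral.integral_eq_sub_of_hasDerivAt hderiv
    ((continuousOn_bubble ht).pow 2).intervalIntegrable]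
  field_simp
  ring

lemma integral_bubble_sub_bubble_sq_mul (ht : 0 < t) :
    ∫ σ in 0..1, (bubble t σ - 2 * t / (1 + t) / 4 * (bubble t σ ^ 2 * σ))
      = (1 + t) / (2 * t) * (log (1 + t) + 1 - 1 / (1 + t)) := by
  have hderiv : ∀ σ ∈ uIcc 0 1,
      HasDerivAt (fun σ => (1 + t) / (2 * t) * (log (1 + t * σ) - (1 + t * σ)⁻¹))
        (bubble t σ - 2 * t / (1 + t) / 4 * (bubble t σ ^ 2 * σ)) σ := fun σ hσ => by
    rw [uIcc_of_le zero_le_one] at hσ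
    have hpos := one_add_mul_pos ht hσ.1
    have hden : HasDerivAt (fun σ => 1 + t * σ) t σ := by
      simpa using ((hasDerivAt_id σ).const_mul t).const_add 1
    refine (((hden.log hpos.ne').sub (hden.inv hpos.ne')).const_mul _).congr_deriv ?_
    rw [bubble]
    field_simp
    ring
  have hcont := continuousOn_bubble ht
  rw [intervalIntegral.integral_eq_sub_of_hasDerivAt hderiv
    (ContinuousOn.intervalIntegrable (by fun_prop))]
  simp only [mul_one, mul_zero, add_zero, log_one, inv_one, one_div]
  ring

theorem mul_log_le_energy {u ux uy : ℝ × ℝ → ℝ} (ht : 0 < t) (hu : Continuous u)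
    (hu_zero : ∀ p : ℝ × ℝ, p.1 ^ 2 + p.2 ^ 2 = 1 → u p = 0)
    (hx : ∀ p ∈ unitDisk, HasDerivAt (fun x => u (x, p.2)) (ux p) p.1)
    (hy : ∀ p ∈ unitDisk, HasDerivAt (fun y => u (p.1, y)) (uy p) p.2)
    (hux : MemLp ux 2 (volume.restrict unitDisk)) (huy : MemLp uy 2 (volume.restrict unitDisk))
    (hmass : ∫ p in unitDisk, exp (2 * u p) = π * (1 + t)) :
    4 * π * (log (1 + t) + 1 / (1 + t) - 1)
      ≤ (∫ p in unitDisk, ux p ^ 2) + ∫ p in unitDisk, uy p ^ 2 := by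
  set g : ℝ × ℝ → ℝ := fun p => bubble t (p.1 ^ 2 + p.2 ^ 2)
  have hg : Continuous g := continuous_bubble_comp ht (by fun_prop) fun p => by positivity
  -- The choice of `κ` for which Young's inequality is sharp for the extremal.
  set κ : ℝ := 2 * t / (1 + t) with hκ_def
  have hκ : 0 < κ := by positivity
  have hbound := setIntegral_unitDisk_le_pi_add_energy hκ hu hu_zero hx hy hux huy hg
    (fun p => bubble_pos ht (by positivity))
    (by rw [hmass, setIntegral_unitDisk_radial fun σ => bubble t σ ^ 2, integral_bubble_sq ht])
  have hprofile : (∫ p in unitDisk, g p) - κ / 4 * ((∫ p in unitDisk, g p ^ 2 * p.1 ^ 2)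
      + ∫ p in unitDisk, g p ^ 2 * p.2 ^ 2)
      = π * ((1 + t) / (2 * t) * (log (1 + t) + 1 - 1 / (1 + t))) := by
    rw [← integral_bubble_sub_bubble_sq_mul ht, ← setIntegral_unitDisk_radial,
      ← integral_add (integrableOn_unitDisk_of_continuous (by fun_prop))
        (integrableOn_unitDisk_of_continuous (by fun_prop)), ← integral_const_mul,
      ← integral_sub (integrableOn_unitDisk_of_continuous hg)
        (integrableOn_unitDisk_of_continuous (by fun_prop))]
    simp only [g, κ, mul_add]
  have hscale : 4 * κ * (π * ((1 + t) / (2 * t) * (log (1 + t) + 1 - 1 / (1 + t))) - π)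
      = 4 * π * (log (1 + t) + 1 / (1 + t) - 1) := by
    rw [hκ_def]
    field_simp
    ring
  rw [← hscale, ← hprofile, ← le_div_iff₀' (by positivity)]
  have : ((∫ p in unitDisk, ux p ^ 2) + ∫ p in unitDisk, uy p ^ 2) / (4 * κ)
    = κ⁻¹ / 4 * ((∫ p in unitDisk, ux p ^ 2) + ∫ p in unitDisk, uy p ^ 2) := by field_simp
  linarith

end Bubble

section Euclidean

lemma memLp_two_fderiv_apply {E : Type*} [NormedAddCommGroup E] [NormedSpace ℝ E]
    [MeasurableSpace E] [OpensMeasurableSpace E] {μ : Measure E} {u : E → ℝ}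
    (hu : Integrable (fun x => ‖fderiv ℝ u x‖ ^ 2) μ) (z : E) :
    MemLp (fun x => fderiv ℝ u x z) 2 μ := by
  have hmeas : Measurable fun x => fderiv ℝ u x z := measurable_fderiv_apply_const ℝ u z
  refine (memLp_two_iff_integrable_sq hmeas.aestronglyMeasurable).2 ?_
  refine (hu.mul_const (‖z‖ ^ 2)).mono' (hmeas.pow_const 2).aestronglyMeasurable (.of_forall ?_)
  intro x
  rw [norm_pow, ← mul_pow]
  gcongr
  exact (fderiv ℝ u x).le_opNorm z

lemma integrableOn_norm_fderiv_sq_of_contDiffOn_closedBall {E F : Type*}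
    [NormedAddCommGroup E] [NormedSpace ℝ E] [ProperSpace E] [MeasurableSpace E] [BorelSpace E]
    [NormedAddCommGroup F] [NormedSpace ℝ F] {μ : Measure E} [IsFiniteMeasureOnCompacts μ]
    {w : E → F} {x : E} {r : ℝ} (hr : 0 < r) (hw : ContDiffOn ℝ 1 w (closedBall x r)) :
    IntegrableOn (fun y => ‖fderiv ℝ w y‖ ^ 2) (ball x r) μ := by
  have huniq : UniqueDiffOn ℝ (closedBall x r) := uniqueDiffOn_convex (convex_closedBall x r)
    ⟨x, ball_subset_interior_closedBall (mem_ball_self hr)⟩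
  have hcont : ContinuousOn (fun y => ‖fderivWithin ℝ w (closedBall x r) y‖ ^ 2)
      (closedBall x r) := (hw.continuousOn_fderivWithin huniq le_rfl).norm.pow 2
  refine ((hcont.integrableOn_compact (isCompact_closedBall x r)).mono_set
    ball_subset_closedBall).congr_fun (fun y hy => ?_) measurableSet_ball
  simp only [fderivWithin_of_mem_nhds (closedBall_mem_nhds_of_mem hy)]

lemma hasDerivAt_comp_prodEquivEuclidean_fst {u : EuclideanSpace ℝ (Fin 2) → ℝ} {p : ℝ × ℝ}
    (hu : DifferentiableAt ℝ u (prodEquivEuclidean p)) :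
    HasDerivAt (fun x => u (prodEquivEuclidean (x, p.2)))
      (fderiv ℝ u (prodEquivEuclidean p) (prodEquivEuclidean (1, 0))) p.1 :=
  hu.hasFDerivAt.comp_hasDerivAt p.1
    (HasFDerivAt.comp_hasDerivAt (l := prodEquivEuclidean) p.1 prodEquivEuclidean.hasFDerivAt
      ((hasDerivAt_id p.1).prodMk (hasDerivAt_const p.1 p.2)))

lemma hasDerivAt_comp_prodEquivEuclidean_snd {u : EuclideanSpace ℝ (Fin 2) → ℝ} {p : ℝ × ℝ}
    (hu : DifferentiableAt ℝ u (prodEquivEuclidean p)) :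
    HasDerivAt (fun y => u (prodEquivEuclidean (p.1, y)))
      (fderiv ℝ u (prodEquivEuclidean p) (prodEquivEuclidean (0, 1))) p.2 :=
  hu.hasFDerivAt.comp_hasDerivAt p.2
    (HasFDerivAt.comp_hasDerivAt (l := prodEquivEuclidean) p.2 prodEquivEuclidean.hasFDerivAt
      ((hasDerivAt_const p.2 p.1).prodMk (hasDerivAt_id p.2)))

theorem mul_log_le_setIntegral_unitBall_of_continuous {u : EuclideanSpace ℝ (Fin 2) → ℝ} {t : ℝ}
    (ht : 0 < t) (hu : Continuous u) (hu_zero : ∀ x ∈ sphere 0 1, u x = 0)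
    (hdiff : DifferentiableOn ℝ u (ball 0 1))
    (hint : IntegrableOn (fun x => ‖fderiv ℝ u x‖ ^ 2) (ball 0 1))
    (hmass : ∫ x in ball 0 1, exp (2 * u x) = π * (1 + t)) :
    4 * π * (log (1 + t) + 1 / (1 + t) - 1) ≤ ∫ x in ball 0 1, ‖fderiv ℝ u x‖ ^ 2 := by
  have hdiffAt (p : ℝ × ℝ) (hp : p ∈ unitDisk) : DifferentiableAt ℝ u (prodEquivEuclidean p) :=
    hdiff.differentiableAt (isOpen_ball.mem_nhds (prodEquivEuclidean_preimage_ball.ge hp))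
  have hzero (p : ℝ × ℝ) (hp : p.1 ^ 2 + p.2 ^ 2 = 1) : u (prodEquivEuclidean p) = 0 := by
    rw [← norm_prodEquivEuclidean_sq, pow_eq_one_iff_of_nonneg (norm_nonneg _) two_ne_zero] at hp
    exact hu_zero _ (mem_sphere_zero_iff_norm.2 hp)
  have hmemLp (z : EuclideanSpace ℝ (Fin 2)) :
      MemLp (fun p => fderiv ℝ u (prodEquivEuclidean p) z) 2 (volume.restrict unitDisk) :=
    (memLp_two_fderiv_apply hint z).comp_measurePreserving
      measurePreserving_prodEquivEuclidean_restrict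
  have h := mul_log_le_energy ht (hu.comp prodEquivEuclidean.continuous) hzero
    (fun p hp => hasDerivAt_comp_prodEquivEuclidean_fst (hdiffAt p hp))
    (fun p hp => hasDerivAt_comp_prodEquivEuclidean_snd (hdiffAt p hp)) (hmemLp _) (hmemLp _)
    ((setIntegral_unitDisk_comp_prodEquivEuclidean fun x => exp (2 * u x)).trans hmass)
  rw [← integral_add (hmemLp _).integrable_sq (hmemLp _).integrable_sq] at h
  simpa only [← norm_sq_eq_apply_prodEquivEuclidean,
    setIntegral_unitDisk_comp_prodEquivEuclidean fun x => ‖fderiv ℝ u x‖ ^ 2] using h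

theorem mul_log_le_setIntegral_unitBall {u : EuclideanSpace ℝ (Fin 2) → ℝ} {t : ℝ}
    (ht : 0 < t) (hu : ContinuousOn u (closedBall 0 1)) (hu_zero : ∀ x ∈ sphere 0 1, u x = 0)
    (hdiff : DifferentiableOn ℝ u (ball 0 1))
    (hint : IntegrableOn (fun x => ‖fderiv ℝ u x‖ ^ 2) (ball 0 1))
    (hmass : ∫ x in ball 0 1, exp (2 * u x) = π * (1 + t)) :
    4 * π * (log (1 + t) + 1 / (1 + t) - 1) ≤ ∫ x in ball 0 1, ‖fderiv ℝ u x‖ ^ 2 := by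
  obtain ⟨v, hv⟩ := ContinuousMap.exists_restrict_eq isClosed_closedBall ⟨_, hu.domRestrict⟩
  have hvu : EqOn v u (closedBall 0 1) := fun x hx => DFunLike.congr_fun hv ⟨x, hx⟩
  have hvu_ball : EqOn v u (ball 0 1) := hvu.mono ball_subset_closedBall
  have hsq : EqOn (fun x => ‖fderiv ℝ v x‖ ^ 2) (fun x => ‖fderiv ℝ u x‖ ^ 2) (ball 0 1) :=
    fun x hx => by
      simp only [(hvu_ball.eventuallyEq_of_mem (isOpen_ball.mem_nhds hx)).fderiv_eq]
  have hexp : EqOn (fun x => exp (2 * v x)) (fun x => exp (2 * u x)) (ball 0 1) :=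
    fun x hx => by simp only [hvu_ball hx]
  rw [← setIntegral_congr_fun measurableSet_ball hsq]
  exact mul_log_le_setIntegral_unitBall_of_continuous ht v.continuous
    (fun x hx => (hvu (sphere_subset_closedBall hx)).trans (hu_zero x hx))
    (hdiff.congr hvu_ball) (hint.congr_fun hsq.symm measurableSet_ball)
    ((setIntegral_congr_fun measurableSet_ball hexp).trans hmass)

end Euclidean

section Scaling

variable {E : Type*} [NormedAddCommGroup E] [NormedSpace ℝ E] {r : ℝ}

lemma preimage_smul_ball_zero (hr : 0 < r) : (fun x : E => r • x) ⁻¹' ball 0 r = ball 0 1 := by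
  ext x
  rw [mem_preimage, mem_ball_zero_iff, mem_ball_zero_iff, norm_smul, norm_of_nonneg hr.le,
    mul_lt_iff_lt_one_right hr]

lemma mapsTo_smul_ball_zero (hr : 0 < r) :
    MapsTo (fun x : E => r • x) (ball 0 1) (ball 0 r) := by
  rw [← preimage_smul_ball_zero hr]
  exact mapsTo_preimage _ _

lemma mapsTo_smul_closedBall_zero (hr : 0 ≤ r) :
    MapsTo (fun x : E => r • x) (closedBall 0 1) (closedBall 0 r) := fun x hx => by
  rw [mem_closedBall_zero_iff] at hx ⊢
  rw [norm_smul, norm_of_nonneg hr]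
  exact mul_le_of_le_one_right hr hx

lemma mapsTo_smul_sphere_zero (hr : 0 ≤ r) :
    MapsTo (fun x : E => r • x) (sphere 0 1) (sphere 0 r) := fun x hx => by
  rw [mem_sphere_zero_iff_norm] at hx ⊢
  rw [norm_smul, norm_of_nonneg hr, hx, mul_one]

lemma norm_fderiv_comp_smul_sub_const_sq (w : E → ℝ) (r b : ℝ) (x : E) :
    ‖fderiv ℝ (fun x => w (r • x) - b) x‖ ^ 2 = r ^ 2 * ‖fderiv ℝ w (r • x)‖ ^ 2 := by
  rw [fderiv_sub_const, fderiv_comp_smul, norm_smul, mul_pow, norm_eq_abs, sq_abs]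

variable [MeasurableSpace E] [BorelSpace E] [FiniteDimensional ℝ E] (μ : Measure E)
  [μ.IsAddHaarMeasure]

lemma setIntegral_unitBall_comp_smul (hr : 0 < r) (F : E → ℝ) :
    ∫ x in ball 0 1, F (r • x) ∂μ
      = (r ^ Module.finrank ℝ E)⁻¹ * ∫ x in ball 0 r, F x ∂μ := by
  rw [Measure.setIntegral_comp_smul_of_pos _ _ _ hr, smul_unitBall_of_pos hr, smul_eq_mul]

lemma integrableOn_unitBall_comp_smul (hr : 0 < r) {F : E → ℝ} (hF : IntegrableOn F (ball 0 r) μ) :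
    IntegrableOn (fun x => F (r • x)) (ball 0 1) μ := by
  rw [← integrable_indicator_iff measurableSet_ball] at hF ⊢
  rw [← preimage_smul_ball_zero hr]
  exact hF.comp_smul hr.ne'

end Scaling

theorem local_sharp_inequality_disk_general (r b a : ℝ) (hr : 0 < r)
    (ha : π * r ^ 2 * Real.exp (2 * b) < a)
    (w : EuclideanSpace ℝ (Fin 2) → ℝ)
    (hw : ContinuousOn w (closedBall 0 r))
    (hdiff : DifferentiableOn ℝ w (ball 0 r))
    (hint : IntegrableOn (fun y => ‖fderiv ℝ w y‖ ^ 2) (ball 0 r))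
    (hbdry : ∀ y ∈ sphere (0 : EuclideanSpace ℝ (Fin 2)) r, w y = b)
    (hconstraint : (∫ y in ball (0 : EuclideanSpace ℝ (Fin 2)) r,
      Real.exp (2 * w y)) = a) :
    4 * π * (Real.log (a * Real.exp (-(2 * b)) / (π * r ^ 2)) +
        π * r ^ 2 * Real.exp (2 * b) / a - 1) ≤
      ∫ y in ball (0 : EuclideanSpace ℝ (Fin 2)) r, ‖fderiv ℝ w y‖ ^ 2 := by
  set c := a * exp (-(2 * b)) / (π * r ^ 2) with hc
  have hc_inv : π * r ^ 2 * exp (2 * b) / a = 1 / c := by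
    rw [hc, exp_neg]
    field_simp
  have hc_one : 1 < c := by
    rw [hc, exp_neg, ← div_eq_mul_inv, div_div, one_lt_div (by positivity)]
    linarith
  have hmass : ∫ x in ball 0 1, exp (2 * (w (r • x) - b)) = π * (1 + (c - 1)) := by
    simp only [mul_sub, exp_sub, integral_div,
      setIntegral_unitBall_comp_smul volume hr fun y => exp (2 * w y), finrank_euclideanSpace_fin,
      hconstraint, hc, exp_neg]
    field_simp
    ring
  have henergy : ∫ x in ball 0 1, ‖fderiv ℝ (fun x => w (r • x) - b) x‖ ^ 2
      = ∫ y in ball 0 r, ‖fderiv ℝ w y‖ ^ 2 := by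
    simp only [norm_fderiv_comp_smul_sub_const_sq, integral_const_mul,
      setIntegral_unitBall_comp_smul volume hr fun y => ‖fderiv ℝ w y‖ ^ 2,
      finrank_euclideanSpace_fin]
    field_simp
  have hint' : IntegrableOn (fun x => ‖fderiv ℝ (fun x => w (r • x) - b) x‖ ^ 2) (ball 0 1) := by
    simp only [norm_fderiv_comp_smul_sub_const_sq]
    exact (integrableOn_unitBall_comp_smul volume hr hint).const_mul (r ^ 2)
  have h := mul_log_le_setIntegral_unitBall (u := fun x => w (r • x) - b) (sub_pos.2 hc_one)
    ((hw.comp (by fun_prop) (mapsTo_smul_closedBall_zero hr.le)).sub continuousOn_const)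
    (fun x hx => sub_eq_zero.2 (hbdry _ (mapsTo_smul_sphere_zero hr.le hx)))
    ((hdiff.comp (by fun_prop) (mapsTo_smul_ball_zero hr)).sub_const b) hint' hmass
  rwa [henergy, add_sub_cancel, ← hc_inv] at h

/-- **Local sharp inequality on the disk, lower bound** (Li–Zhu, Corollary 2).
Let `w` be `C¹` on the closed disk of radius `r` in `ℝ²` with `w = b` on the
boundary circle, and `∫_{B_r} e^{2w} = a` with `a > π r² e^{2b}`. Then
`∫_{B_r} |∇w|² ≥ 4π (ln (a e^{-2b}/(π r²)) + π r² e^{2b}/a - 1)`. -/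
theorem local_sharp_inequality_disk (r b a : ℝ) (hr : 0 < r)
    (ha : π * r ^ 2 * Real.exp (2 * b) < a)
    (w : EuclideanSpace ℝ (Fin 2) → ℝ)
    (hw : ContDiffOn ℝ 1 w (closedBall 0 r))
    (hbdry : ∀ y ∈ sphere (0 : EuclideanSpace ℝ (Fin 2)) r, w y = b)
    (hconstraint : (∫ y in ball (0 : EuclideanSpace ℝ (Fin 2)) r,
      Real.exp (2 * w y)) = a) :
    4 * π * (Real.log (a * Real.exp (-(2 * b)) / (π * r ^ 2)) +
        π * r ^ 2 * Real.exp (2 * b) / a - 1) ≤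
      ∫ y in ball (0 : EuclideanSpace ℝ (Fin 2)) r, ‖fderiv ℝ w y‖ ^ 2 :=
  local_sharp_inequality_disk_general r b a hr ha w hw.continuousOn
    ((hw.differentiableOn one_ne_zero).mono ball_subset_closedBall)
    (integrableOn_norm_fderiv_sq_of_contDiffOn_closedBall hr hw) hbdry hconstraint
end

section
/- Let r > 0, b ∈ ℝ, and B_r(0) ⊂ ℝ² the open disk of radius r centered at the origin. For every a > π r² e^{2b} and every ε > 0 there exists a C¹ function w on the closed disk with w = b on ∂B_r(0) and ∫_{B_r(0)} e^{2w(y)} dy = a, such that ∫_{B_r(0)} |∇w(y)|² dy < 4π · ( ln( a e^{−2b}/(π r²) ) + (π r² e^{2b})/a − 1 ) + ε. Hence the constant 4π·( ln(a e^{−2b}/(π r²)) + π r² e^{2b}/a − 1 ) is exactly the infimum of the Dirichlet energy over this class. -/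
open MeasureTheory Real Set Metric

/-!
The extremals are the conformal factors `w` for which `e^{2w}|dy|²` has constant curvature: a
spherical cap when `κ > 0`, a flat disk when `κ = 0`, a hyperbolic disk when `κ < 0`. Prescribing
`w = b` on the circle leaves the family `w(y) = b + ln ((1 + κ r²) / (1 + κ |y|²))`, where
`1 + κ r² > 0`. In polar coordinates the area is `π r² e^{2b} s` and the energy is
`4π (ln s + 1 / s - 1)`, with `s = 1 + κ r²`, so the choice `s = a e^{-2b} / (π r²)` attains the
constant exactly.
-/

open scoped ContDiff

section RadialFunctions

theorem setIntegral_ball_fun_norm_addHaar {E F : Type*} [NormedAddCommGroup E] [NormedSpace ℝ E]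
    [FiniteDimensional ℝ E] [Nontrivial E] [MeasurableSpace E] [BorelSpace E]
    [NormedAddCommGroup F] [NormedSpace ℝ F] (μ : Measure E) [μ.IsAddHaarMeasure]
    {r : ℝ} (hr : 0 ≤ r) (f : ℝ → F) :
    ∫ y in ball (0 : E) r, f ‖y‖ ∂μ =
      Module.finrank ℝ E • μ.real (ball 0 1) •
        ∫ t in (0 : ℝ)..r, t ^ (Module.finrank ℝ E - 1) • f t := by
  have indicator_ball : (ball (0 : E) r).indicator (fun y ↦ f ‖y‖) =
      fun y ↦ (Iio r).indicator f ‖y‖ := by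
    ext y
    simp only [indicator, mem_ball_zero_iff, mem_Iio]
  rw [← integral_indicator measurableSet_ball, indicator_ball, integral_fun_norm_addHaar μ,
    intervalIntegral.integral_of_le hr, integral_Ioc_eq_integral_Ioo, ← Ioi_inter_Iio,
    ← setIntegral_indicator measurableSet_Iio]
  simp only [indicator_smul]

theorem setIntegral_ball_fun_norm_of_finrank_eq_two {E F : Type*} [NormedAddCommGroup E]
    [InnerProductSpace ℝ E] [FiniteDimensional ℝ E] [MeasurableSpace E] [BorelSpace E]
    [NormedAddCommGroup F] [NormedSpace ℝ F] (hE : Module.finrank ℝ E = 2)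
    {r : ℝ} (hr : 0 ≤ r) (f : ℝ → F) :
    ∫ y in ball (0 : E) r, f ‖y‖ = (2 * π) • ∫ t in (0 : ℝ)..r, t • f t := by
  have : Nontrivial E := Module.nontrivial_of_finrank_pos (R := ℝ) (hE ▸ two_pos)
  have volume_unit_disk : volume.real (ball (0 : E) 1) = π := by
    rw [Measure.real, InnerProductSpace.volume_ball_of_dim_even (k := 1) (by rw [hE])]
    simp [pi_nonneg]
  rw [setIntegral_ball_fun_norm_addHaar volume hr, volume_unit_disk, hE,
    ← Nat.cast_smul_eq_nsmul ℝ, smul_smul]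
  simp only [Nat.add_one_sub_one, pow_one, Nat.cast_ofNat]

theorem norm_fderiv_comp_norm_sq {E F : Type*} [NormedAddCommGroup E] [InnerProductSpace ℝ E]
    [NormedAddCommGroup F] [NormedSpace ℝ F] {g : ℝ → F} {g' : F} {y : E}
    (hg : HasDerivAt g g' (‖y‖ ^ 2)) :
    ‖fderiv ℝ (fun x : E ↦ g (‖x‖ ^ 2)) y‖ = 2 * ‖y‖ * ‖g'‖ := by
  have fderiv_eq : fderiv ℝ (fun x : E ↦ g (‖x‖ ^ 2)) y =
      ((2 : ℝ) • innerSL ℝ y).smulRight g' := by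
    refine (hg.hasFDerivAt.comp y (hasStrictFDerivAt_norm_sq y).hasFDerivAt).fderiv.trans ?_
    ext x
    simp [two_smul, add_smul]
  rw [fderiv_eq, ContinuousLinearMap.norm_smulRight_apply, norm_smul, innerSL_apply_norm,
    Real.norm_ofNat]

end RadialFunctions

section RadialIntegrals

variable {κ r t : ℝ}

theorem one_add_mul_sq_pos_of_abs_le (h : 0 < 1 + κ * r ^ 2) (ht : |t| ≤ |r|) :
    0 < 1 + κ * t ^ 2 := by
  rcases le_total 0 κ with hκ | hκ
  · positivity
  · have := mul_le_mul_of_nonpos_left (sq_le_sq.2 ht) hκ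
    linarith

theorem one_add_mul_sq_pos_of_mem_uIcc (h : 0 < 1 + κ * r ^ 2) (ht : t ∈ uIcc 0 r) :
    0 < 1 + κ * t ^ 2 :=
  one_add_mul_sq_pos_of_abs_le h <| by simpa only [sub_zero] using abs_sub_left_of_mem_uIcc ht

theorem hasDerivAt_one_add_mul_sq (κ t : ℝ) :
    HasDerivAt (fun t ↦ 1 + κ * t ^ 2) (2 * κ * t) t :=
  (((hasDerivAt_pow 2 t).const_mul κ).const_add 1).congr_deriv (by push_cast; ring)

theorem integral_div_one_add_mul_sq_sq (h : 0 < 1 + κ * r ^ 2) :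
    ∫ t in (0 : ℝ)..r, t / (1 + κ * t ^ 2) ^ 2 = r ^ 2 / (2 * (1 + κ * r ^ 2)) := by
  have pos {t : ℝ} (ht : t ∈ uIcc 0 r) := one_add_mul_sq_pos_of_mem_uIcc h ht
  have antideriv : ∀ t ∈ uIcc 0 r, HasDerivAt (fun t ↦ t ^ 2 / (2 * (1 + κ * t ^ 2)))
      (t / (1 + κ * t ^ 2) ^ 2) t := fun t ht ↦ by
    have := (pos ht).ne'
    refine ((hasDerivAt_pow 2 t).fun_div ((hasDerivAt_one_add_mul_sq κ t).const_mul 2)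
      (by positivity)).congr_deriv ?_
    field_simp
    push_cast
    ring
  have integrable : IntervalIntegrable (fun t ↦ t / (1 + κ * t ^ 2) ^ 2) volume 0 r :=
    (continuousOn_id.div (by fun_prop) fun t ht ↦
      pow_ne_zero 2 (pos ht).ne').intervalIntegrable
  simp [intervalIntegral.integral_eq_sub_of_hasDerivAt antideriv integrable]

theorem integral_cube_div_one_add_mul_sq_sq (h : 0 < 1 + κ * r ^ 2) :
    ∫ t in (0 : ℝ)..r, 4 * κ ^ 2 * t ^ 3 / (1 + κ * t ^ 2) ^ 2 =
      2 * (log (1 + κ * r ^ 2) + (1 + κ * r ^ 2)⁻¹ - 1) := by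
  have pos {t : ℝ} (ht : t ∈ uIcc 0 r) := one_add_mul_sq_pos_of_mem_uIcc h ht
  have antideriv : ∀ t ∈ uIcc 0 r,
      HasDerivAt (fun t ↦ 2 * (log (1 + κ * t ^ 2) + (1 + κ * t ^ 2)⁻¹))
        (4 * κ ^ 2 * t ^ 3 / (1 + κ * t ^ 2) ^ 2) t := fun t ht ↦ by
    have ne := (pos ht).ne'
    have deriv_base := hasDerivAt_one_add_mul_sq κ t
    refine (((deriv_base.log ne).add (deriv_base.fun_inv ne)).const_mul 2).congr_deriv ?_
    field_simp
    ring
  have integrable :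
      IntervalIntegrable (fun t ↦ 4 * κ ^ 2 * t ^ 3 / (1 + κ * t ^ 2) ^ 2) volume 0 r :=
    (ContinuousOn.div (by fun_prop) (by fun_prop) fun t ht ↦
      pow_ne_zero 2 (pos ht).ne').intervalIntegrable
  rw [intervalIntegral.integral_eq_sub_of_hasDerivAt antideriv integrable]
  simp only [ne_eq, OfNat.ofNat_ne_zero, not_false_eq_true, zero_pow, mul_zero, add_zero, log_one,
    inv_one, zero_add]
  ring

end RadialIntegrals

/-- The conformal factor with boundary value `b` on the circle of radius `r` for which the metric
`e^{2w}|dy|²` has constant curvature of the sign of `κ`. The paper's `λ₀` is `1 / (κ r²)`, and its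
radial variable is `-ln (‖y‖ / r)`. The formula is meaningful where `1 + κ ‖y‖² > 0`; outside, the
logarithm takes a junk value. -/
noncomputable def conformalBubble {E : Type*} [NormedAddCommGroup E] (r b κ : ℝ) (y : E) : ℝ :=
  b + log (1 + κ * r ^ 2) - log (1 + κ * ‖y‖ ^ 2)

section ConformalBubble

variable {E : Type*} [NormedAddCommGroup E] {r κ : ℝ} (b : ℝ) {y : E}

theorem conformalBubble_of_mem_sphere (κ : ℝ) (hy : y ∈ sphere 0 r) :
    conformalBubble r b κ y = b := by
  rw [conformalBubble, mem_sphere_zero_iff_norm.1 hy, add_sub_cancel_right]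

theorem one_add_mul_norm_sq_pos (h : 0 < 1 + κ * r ^ 2) (hy : y ∈ closedBall 0 r) :
    0 < 1 + κ * ‖y‖ ^ 2 :=
  one_add_mul_sq_pos_of_abs_le h <| by
    simpa only [abs_norm] using (mem_closedBall_zero_iff.1 hy).trans (le_abs_self r)

theorem exp_two_mul_conformalBubble (h : 0 < 1 + κ * r ^ 2) (hy : y ∈ closedBall 0 r) :
    exp (2 * conformalBubble r b κ y) =
      exp (2 * b) * ((1 + κ * r ^ 2) / (1 + κ * ‖y‖ ^ 2)) ^ 2 := by
  have h_y := one_add_mul_norm_sq_pos h hy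
  rw [conformalBubble, add_sub_assoc, ← log_div h.ne' h_y.ne', mul_add, exp_add,
    two_mul (log _), exp_add, exp_log (div_pos h h_y), ← sq]

variable [InnerProductSpace ℝ E]

theorem contDiffOn_conformalBubble (h : 0 < 1 + κ * r ^ 2) :
    ContDiffOn ℝ ω (conformalBubble r b κ) (closedBall (0 : E) r) :=
  contDiffOn_const.sub <|
    (contDiff_const.add <| contDiff_const.mul <| contDiff_norm_sq ℝ).contDiffOn.log fun _ hy ↦
      (one_add_mul_norm_sq_pos h hy).ne'

theorem norm_fderiv_conformalBubble_sq (h : 1 + κ * ‖y‖ ^ 2 ≠ 0) :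
    ‖fderiv ℝ (conformalBubble r b κ) y‖ ^ 2 =
      4 * κ ^ 2 * ‖y‖ ^ 2 / (1 + κ * ‖y‖ ^ 2) ^ 2 := by
  have deriv_profile : HasDerivAt (fun u ↦ b + log (1 + κ * r ^ 2) - log (1 + κ * u))
      (-(κ / (1 + κ * ‖y‖ ^ 2))) (‖y‖ ^ 2) := by
    simpa using ((((hasDerivAt_id _).const_mul κ).const_add 1).log h).const_sub _
  refine (congrArg (· ^ 2) (norm_fderiv_comp_norm_sq deriv_profile)).trans ?_
  rw [norm_neg, mul_pow, norm_eq_abs, sq_abs, div_pow]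
  ring

variable [FiniteDimensional ℝ E] [MeasurableSpace E] [BorelSpace E]

theorem setIntegral_exp_two_mul_conformalBubble (hE : Module.finrank ℝ E = 2) (hr : 0 ≤ r)
    (h : 0 < 1 + κ * r ^ 2) :
    ∫ y in ball (0 : E) r, exp (2 * conformalBubble r b κ y) =
      π * r ^ 2 * exp (2 * b) * (1 + κ * r ^ 2) :=
  calc ∫ y in ball (0 : E) r, exp (2 * conformalBubble r b κ y)
    _ = ∫ y in ball (0 : E) r, exp (2 * b) * ((1 + κ * r ^ 2) / (1 + κ * ‖y‖ ^ 2)) ^ 2 :=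
      setIntegral_congr_fun measurableSet_ball fun _ hy ↦
        exp_two_mul_conformalBubble b h (ball_subset_closedBall hy)
    _ = 2 * π * ∫ t in (0 : ℝ)..r, t * (exp (2 * b) * ((1 + κ * r ^ 2) / (1 + κ * t ^ 2)) ^ 2) :=
      setIntegral_ball_fun_norm_of_finrank_eq_two hE hr fun t ↦
        exp (2 * b) * ((1 + κ * r ^ 2) / (1 + κ * t ^ 2)) ^ 2
    _ = 2 * π * ∫ t in (0 : ℝ)..r,
          exp (2 * b) * (1 + κ * r ^ 2) ^ 2 * (t / (1 + κ * t ^ 2) ^ 2) := by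
      congr! 3; rw [div_pow]; ring
    _ = π * r ^ 2 * exp (2 * b) * (1 + κ * r ^ 2) := by
      rw [intervalIntegral.integral_const_mul, integral_div_one_add_mul_sq_sq h]
      field_simp

theorem setIntegral_norm_fderiv_conformalBubble_sq (hE : Module.finrank ℝ E = 2) (hr : 0 ≤ r)
    (h : 0 < 1 + κ * r ^ 2) :
    ∫ y in ball (0 : E) r, ‖fderiv ℝ (conformalBubble r b κ) y‖ ^ 2 =
      4 * π * (log (1 + κ * r ^ 2) + (1 + κ * r ^ 2)⁻¹ - 1) :=
  calc ∫ y in ball (0 : E) r, ‖fderiv ℝ (conformalBubble r b κ) y‖ ^ 2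
    _ = ∫ y in ball (0 : E) r, 4 * κ ^ 2 * ‖y‖ ^ 2 / (1 + κ * ‖y‖ ^ 2) ^ 2 :=
      setIntegral_congr_fun measurableSet_ball fun _ hy ↦
        norm_fderiv_conformalBubble_sq b
          (one_add_mul_norm_sq_pos h (ball_subset_closedBall hy)).ne'
    _ = 2 * π * ∫ t in (0 : ℝ)..r, t * (4 * κ ^ 2 * t ^ 2 / (1 + κ * t ^ 2) ^ 2) :=
      setIntegral_ball_fun_norm_of_finrank_eq_two hE hr fun t ↦
        4 * κ ^ 2 * t ^ 2 / (1 + κ * t ^ 2) ^ 2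
    _ = 2 * π * ∫ t in (0 : ℝ)..r, 4 * κ ^ 2 * t ^ 3 / (1 + κ * t ^ 2) ^ 2 := by
      congr! 3; ring
    _ = 4 * π * (log (1 + κ * r ^ 2) + (1 + κ * r ^ 2)⁻¹ - 1) := by
      rw [integral_cube_div_one_add_mul_sq_sq h]
      ring

end ConformalBubble

theorem local_sharp_inequality_disk_sharp_general {E : Type*} [NormedAddCommGroup E]
    [InnerProductSpace ℝ E] [FiniteDimensional ℝ E] [MeasurableSpace E] [BorelSpace E]
    (hE : Module.finrank ℝ E = 2) (r b a : ℝ) (hr : 0 < r) (ha : 0 < a) :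
    ∃ w : E → ℝ,
      ContDiffOn ℝ ω w (closedBall 0 r) ∧
      (∀ y ∈ sphere (0 : E) r, w y = b) ∧
      (∫ y in ball (0 : E) r, exp (2 * w y)) = a ∧
      (∫ y in ball (0 : E) r, ‖fderiv ℝ w y‖ ^ 2) =
        4 * π * (log (a * exp (-(2 * b)) / (π * r ^ 2)) + π * r ^ 2 * exp (2 * b) / a - 1) := by
  set s := a * exp (-(2 * b)) / (π * r ^ 2) with hs
  have s_pos : 0 < s := by positivity
  have area_eq : π * r ^ 2 * exp (2 * b) * s = a := by
    rw [hs, exp_neg]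
    field_simp
  have inv_s_eq : s⁻¹ = π * r ^ 2 * exp (2 * b) / a := by
    rw [← area_eq]
    field_simp
  obtain ⟨κ, hκ⟩ : ∃ κ, 1 + κ * r ^ 2 = s := ⟨(s - 1) / r ^ 2, by field_simp; ring⟩
  have h : 0 < 1 + κ * r ^ 2 := hκ ▸ s_pos
  refine ⟨conformalBubble r b κ, contDiffOn_conformalBubble b h,
    fun _ ↦ conformalBubble_of_mem_sphere b κ, ?_, ?_⟩
  · rw [setIntegral_exp_two_mul_conformalBubble b hE hr.le h, hκ, area_eq]
  · rw [setIntegral_norm_fderiv_conformalBubble_sq b hE hr.le h, hκ, inv_s_eq]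

/-- **Local sharp inequality on the disk, sharpness** (Li–Zhu, Corollary 2).
For every `a > π r² e^{2b}` and every `ε > 0` there is a `C¹` function `w` on the
closed disk of radius `r` in `ℝ²` with `w = b` on the boundary circle and
`∫_{B_r} e^{2w} = a`, whose Dirichlet energy satisfies
`∫_{B_r} |∇w|² < 4π (ln (a e^{-2b}/(π r²)) + π r² e^{2b}/a - 1) + ε`. -/
theorem local_sharp_inequality_disk_sharp (r b a : ℝ) (hr : 0 < r)
    (ha : π * r ^ 2 * Real.exp (2 * b) < a) (ε : ℝ) (hε : 0 < ε) :
    ∃ w : EuclideanSpace ℝ (Fin 2) → ℝ,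
      ContDiffOn ℝ 1 w (closedBall 0 r) ∧
      (∀ y ∈ sphere (0 : EuclideanSpace ℝ (Fin 2)) r, w y = b) ∧
      (∫ y in ball (0 : EuclideanSpace ℝ (Fin 2)) r, Real.exp (2 * w y)) = a ∧
      (∫ y in ball (0 : EuclideanSpace ℝ (Fin 2)) r, ‖fderiv ℝ w y‖ ^ 2) <
        4 * π * (Real.log (a * Real.exp (-(2 * b)) / (π * r ^ 2)) +
          π * r ^ 2 * Real.exp (2 * b) / a - 1) + ε := by
  obtain ⟨w, smooth, boundary, area, energy⟩ := local_sharp_inequality_disk_sharp_general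
    finrank_euclideanSpace_fin r b a hr (ha.trans' (by positivity))
  exact ⟨w, smooth.of_le le_top, boundary, area, energy.trans_lt (lt_add_of_pos_right _ hε)⟩
end
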